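/- (Parabolic invariance) Let λ ∈ Λ_I⁺ and β ∈ Ψ_λ⁺ (note Φ_I ⊆ Φ_{β,1}). Then there exists μ ∈ Λ_I⁺ with sgn(s_βλ, μ) ≠ 0 if and only if there exists μ' ∈ Λ⁺(Φ_I, Φ_{β,1}) with sgn(s_β(λ|_{Φ_{β,1}}), μ', Φ_I, Φ_{β,1}) ≠ 0. In particular, if sgn(s_βλ, μ) ≠ 0, then μ' = μ|_{Φ_{β,1}} and c(λ,μ) = c(λ|_{Φ_{β,1}}, μ|_{Φ_{β,1}}, Φ_I, Φ_{β,1}). -/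

import Mathlib

open scoped RealInnerProductSpace
open Classical

noncomputable section

namespace JantzenGVM

variable {V : Type*} [NormedAddCommGroup V] [InnerProductSpace ℝ V] [FiniteDimensional ℝ V]

/-- The coroot `α^∨ = 2α/⟨α,α⟩` of a vector `α` (junk value `0` when `α = 0`). -/
def coroot (α : V) : V := (2 / ⟪α, α⟫) • α

/-- The linear functional `v ↦ ⟨v, α^∨⟩`. -/
def corootForm (α : V) : V →ₗ[ℝ] ℝ where
  toFun v := ⟪v, coroot α⟫
  map_add' x y := by simp [inner_add_left]
  map_smul' c x := by simp [inner_smul_left]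

lemma corootForm_self {α : V} (h : ⟪α, α⟫ ≠ 0) : corootForm α α = 2 := by
  simp only [corootForm, coroot, LinearMap.coe_mk, AddHom.coe_mk, real_inner_smul_right]
  field_simp

/-- The reflection `s_α` as a linear automorphism of `V` (the identity when `⟨α,α⟩ = 0`). -/
def reflV (α : V) : V ≃ₗ[ℝ] V :=
  if h : ⟪α, α⟫ = 0 then LinearEquiv.refl ℝ V
  else Module.reflection (corootForm_self h)

/-- `h* = ℂ ⊗ V`, realized as the space of real-linear functionals `V → ℂ` via the
inner product; an element `λ` pairs with a root `α` by `⟨λ, α⟩ = λ α` and with the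
coroot by `⟨λ, α^∨⟩ = λ (coroot α)`. -/
abbrev HStar (V : Type*) [NormedAddCommGroup V] [InnerProductSpace ℝ V] := V →ₗ[ℝ] ℂ

/-- The canonical embedding of `V` into `h*`. -/
def emb (α : V) : HStar V where
  toFun v := (⟪α, v⟫ : ℂ)
  map_add' x y := by simp [inner_add_right]
  map_smul' c x := by simp [inner_smul_right, Complex.real_smul]

/-- The action of a linear automorphism `w` of `V` on `h*`: `(w • λ)(v) = λ(w⁻¹ v)`. -/
def wAct (w : V ≃ₗ[ℝ] V) (l : HStar V) : HStar V := l ∘ₗ (w.symm : V →ₗ[ℝ] V)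

/-- The reflection `s_β λ = λ - ⟨λ, β^∨⟩ β` acting on `h*`. -/
def sRefl (β : V) (l : HStar V) : HStar V := l - l (coroot β) • emb β

/-- The group generated by the reflections in the elements of `Φ'`. -/
def weyl (Φ' : Set V) : Subgroup (V ≃ₗ[ℝ] V) :=
  Subgroup.closure {w | ∃ α ∈ Φ', w = reflV α}

/-- A finite, reduced, crystallographic root system spanning the Euclidean space `V`,
together with a choice of positive system and the corresponding simple system. -/
structure RootSys (V : Type*) [NormedAddCommGroup V] [InnerProductSpace ℝ V]
    [FiniteDimensional ℝ V] where
  Φ : Finset V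
  pos : Finset V
  Δ : Finset V
  ne_zero : ∀ α ∈ Φ, α ≠ (0 : V)
  span_eq_top : Submodule.span ℝ (Φ : Set V) = ⊤
  reduced : ∀ α ∈ Φ, ∀ c : ℝ, c • α ∈ Φ → c = 1 ∨ c = -1
  refl_mem : ∀ α ∈ Φ, ∀ β ∈ Φ, reflV α β ∈ Φ
  crystallographic : ∀ α ∈ Φ, ∀ β ∈ Φ, ∃ n : ℤ, ⟪β, coroot α⟫ = (n : ℝ)
  pos_subset : pos ⊆ Φ
  mem_pos_or : ∀ α ∈ Φ, α ∈ pos ∨ -α ∈ pos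
  not_both : ∀ α ∈ pos, -α ∉ pos
  simple_subset : Δ ⊆ pos
  simple_indep : LinearIndependent ℝ (fun x : {a : V // a ∈ Δ} => x.1)
  simple_gen : ∀ β ∈ pos, ∃ c : V → ℝ, (∀ α ∈ Δ, 0 ≤ c α) ∧ β = ∑ α ∈ Δ, c α • α

/-- A subsystem of the root system: a subset of `Φ` closed under its own reflections. -/
def IsSubsystem (S : RootSys V) (Φ' : Set V) : Prop :=
  Φ' ⊆ (S.Φ : Set V) ∧ ∀ α ∈ Φ', ∀ β ∈ Φ', reflV α β ∈ Φ'

/-- The length of `w`, i.e. the number of positive roots sent to negative roots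
(this equals the Coxeter length for elements of the Weyl group). -/
def len (S : RootSys V) (w : V ≃ₗ[ℝ] V) : ℕ :=
  {β ∈ (S.pos : Set V) | w β ∉ (S.pos : Set V)}.ncard

/-- `Φ_I = ℤI ∩ Φ`, the subsystem generated by a subset `I` of the simple roots. -/
def PhiI (S : RootSys V) (I : Finset V) : Set V :=
  {α ∈ (S.Φ : Set V) | α ∈ Submodule.span ℤ (I : Set V)}

/-- `z` is a positive integer. -/
def IsPosInt (z : ℂ) : Prop := ∃ n : ℤ, 0 < n ∧ z = (n : ℂ)

/-- `z` is an integer. -/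
def IsInt (z : ℂ) : Prop := ∃ n : ℤ, z = (n : ℂ)

/-- `Λ_I⁺ = {λ ∈ h* : ⟨λ, α^∨⟩ ∈ ℤ_{>0} for all α ∈ I}`. -/
def LambdaP (I : Set V) : Set (HStar V) :=
  {l | ∀ α ∈ I, IsPosInt (l (coroot α))}

/-- `Λ⁺(Φ'', Φ') = {ν ∈ ℂΦ' : ⟨ν, α^∨⟩ ∈ ℤ_{>0} for all α ∈ Φ'' ∩ Φ⁺}`. -/
def LambdaPSub (S : RootSys V) (Φ'' Φ' : Set V) : Set (HStar V) :=
  {l | l ∈ Submodule.span ℂ (emb '' Φ') ∧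
       ∀ α ∈ Φ'' ∩ (S.pos : Set V), IsPosInt (l (coroot α))}

/-- `λ` is `Φ''`-regular: `⟨λ, α⟩ ≠ 0` for all `α ∈ Φ''`. -/
def IsRegularOn (Φ'' : Set V) (l : HStar V) : Prop := ∀ α ∈ Φ'', l α ≠ 0

/-- `Ψ⁺(λ, Φ'', Φ') = {β ∈ (Φ' ∩ Φ⁺) \ Φ'' : ⟨λ, β^∨⟩ ∈ ℤ_{>0}}`. -/
def PsiP (S : RootSys V) (Φ'' Φ' : Set V) (l : HStar V) : Set V :=
  {β | β ∈ Φ' ∩ (S.pos : Set V) ∧ β ∉ Φ'' ∧ IsPosInt (l (coroot β))}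

/-- `Ψ⁺⁺(λ, Φ'', Φ') = {β ∈ Ψ⁺(λ, Φ'', Φ') : s_β λ is Φ''-regular}`. -/
def PsiPP (S : RootSys V) (Φ'' Φ' : Set V) (l : HStar V) : Set V :=
  {β ∈ PsiP S Φ'' Φ' l | ∀ α ∈ Φ'', (sRefl β l) α ≠ 0}

/-- The sign function: `sgn(λ, μ) = (-1)^{ℓ(w)}` if `λ, μ` are `Φ''`-regular and
`μ = wλ` for some `w ∈ W(Φ'')`, and `0` otherwise. -/
def sgnW (S : RootSys V) (Φ'' : Set V) (l m : HStar V) : ℤ :=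
  if h : IsRegularOn Φ'' l ∧ IsRegularOn Φ'' m ∧ ∃ w, w ∈ weyl Φ'' ∧ m = wAct w l
  then (-1) ^ len S h.2.2.choose else 0

/-- The Jantzen coefficient `c(λ, μ, Φ'', Φ') = Σ_{β ∈ Ψ⁺⁺(λ,Φ'',Φ')} sgn(s_β λ, μ)`. -/
def jc (S : RootSys V) (Φ'' Φ' : Set V) (l m : HStar V) : ℤ :=
  ∑ᶠ β ∈ PsiPP S Φ'' Φ' l, sgnW S Φ'' (sRefl β l) m

/-- The symmetrized Jantzen coefficient `c̃(λ, μ, Φ'', Φ')`. -/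
def jcSym (S : RootSys V) (Φ'' Φ' : Set V) (l m : HStar V) : ℤ :=
  jc S Φ'' Φ' l m + jc S Φ'' Φ' m l

/-- `θ(λ) = Σ_{w ∈ W_I} (-1)^{ℓ(w)} e^{wλ}` in the free `ℤ`-module on `h*`. -/
def theta (S : RootSys V) (I : Finset V) (l : HStar V) : HStar V →₀ ℤ :=
  ∑ᶠ w ∈ (weyl (PhiI S I) : Set (V ≃ₗ[ℝ] V)),
    Finsupp.single (wAct w l) ((-1) ^ len S w)

/-- `Φ_λ = {α ∈ Φ : ⟨λ, α⟩ = 0}`. -/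
def singSet (S : RootSys V) (l : HStar V) : Set V :=
  {α ∈ (S.Φ : Set V) | l α = 0}

/-- `Φ_{[λ]} = {α ∈ Φ : ⟨λ, α^∨⟩ ∈ ℤ}`. -/
def integralSet (S : RootSys V) (l : HStar V) : Set V :=
  {α ∈ (S.Φ : Set V) | IsInt (l (coroot α))}

/-- `(ℚ A) ∩ Φ`, the intersection of the rational span of `A` with `Φ`.
Taking `A = Φ_I ∪ {β}` gives `Φ_{β,1}`; taking `A = Φ_λ ∪ {β}` gives `Φ_{β,2}`. -/
def ratSpanRoots (S : RootSys V) (A : Set V) : Set V :=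
  {γ ∈ (S.Φ : Set V) | ∃ (t : Finset V) (c : V → ℚ),
    (t : Set V) ⊆ A ∧ γ = ∑ α ∈ t, (c α : ℝ) • α}

/-- `Φ_{β,0}`, the irreducible component of `Φ` containing `β`. -/
def component (S : RootSys V) (β : V) : Set V :=
  {γ ∈ (S.Φ : Set V) |
    Relation.ReflTransGen
      (fun x y => x ∈ (S.Φ : Set V) ∧ y ∈ (S.Φ : Set V) ∧ ⟪x, y⟫ ≠ 0) β γ}

/-- `λ|_{Φ'}`: the unique element of `ℂΦ'` with `⟨λ|_{Φ'}, α^∨⟩ = ⟨λ, α^∨⟩`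
for all `α ∈ Φ'`. -/
def restrictW (Φ' : Set V) (l : HStar V) : HStar V :=
  letI : Nonempty (HStar V) := ⟨0⟩
  Classical.epsilon fun m =>
    m ∈ Submodule.span ℂ (emb '' Φ') ∧ ∀ α ∈ Φ', m (coroot α) = l (coroot α)

/-- `ᴵWᴶ = {w ∈ W : ℓ(uwv) = ℓ(u) + ℓ(w) + ℓ(v) for all u ∈ W_I, v ∈ W_J}`. -/
def doubleCoset (S : RootSys V) (I J : Finset V) : Set (V ≃ₗ[ℝ] V) :=
  {w | w ∈ weyl (S.Φ : Set V) ∧ ∀ u ∈ weyl (PhiI S I), ∀ v ∈ weyl (PhiI S J),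
    len S (u * w * v) = len S u + len S w + len S v}

/-- The fundamental weight `ϖ_j` relative to an enumeration `e` of the simple roots:
the unique element of `h*` with `⟨ϖ_j, α_k^∨⟩ = δ_{jk}`. -/
def fundWeight {n : ℕ} (e : Fin n → V) (j : Fin n) : HStar V :=
  letI : Nonempty (HStar V) := ⟨0⟩
  Classical.epsilon fun m => ∀ k : Fin n, m (coroot (e k)) = if k = j then 1 else 0

/-- The labels of the irreducible Dynkin types. -/
inductive LieType | A | B | C | D | E | F | G
deriving DecidableEq

/-- The Cartan matrix of type `A_n` (1-based indices): entry `(i,j)` is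
`⟨α_i, α_j^∨⟩`. -/
def cartanA (i j : ℕ) : ℤ :=
  if i = j then 2 else if i + 1 = j ∨ j + 1 = i then -1 else 0

/-- The Cartan matrices of the irreducible types in the standard (Bourbaki/Humphreys)
numbering of the Dynkin diagram: `cartanEntry t n i j = ⟨α_i, α_j^∨⟩` (1-based). -/
def cartanEntry : LieType → ℕ → ℕ → ℕ → ℤ
  | .A, _, i, j => cartanA i j
  | .B, n, i, j => if i + 1 = n ∧ j = n then -2 else cartanA i j
  | .C, n, i, j => if i = n ∧ j + 1 = n then -2 else cartanA i j
  | .D, n, i, j =>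
      if i = j then 2
      else if (i + 2 = n ∧ j = n) ∨ (i = n ∧ j + 2 = n) then -1
      else if (i + 1 = n ∧ j = n) ∨ (i = n ∧ j + 1 = n) then 0
      else cartanA i j
  | .E, _, i, j =>
      if i = j then 2
      else if (i = 1 ∧ j = 3) ∨ (i = 3 ∧ j = 1) ∨ (i = 2 ∧ j = 4) ∨ (i = 4 ∧ j = 2) then -1
      else if (i = 1 ∧ j = 2) ∨ (i = 2 ∧ j = 1) ∨ (i = 2 ∧ j = 3) ∨ (i = 3 ∧ j = 2) then 0
      else cartanA i j
  | .F, _, i, j => if i = 2 ∧ j = 3 then -2 else cartanA i j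
  | .G, _, i, j => if i = 2 ∧ j = 1 then -3 else cartanA i j

/-- The standard basis vector `e_k` (1-based index, junk `0` outside `1 ≤ k ≤ n`). -/
def stdE (n k : ℕ) : EuclideanSpace ℝ (Fin n) :=
  if h : 1 ≤ k ∧ k ≤ n then EuclideanSpace.single ⟨k - 1, by omega⟩ 1 else 0

/-- The labels `B`, `C`, `D` of the classical non-`A` types. -/
inductive BCD | B | C | D
deriving DecidableEq

/-- The root set of `B_n` / `C_n` / `D_n` in the standard realization. -/
def bcdRoots (t : BCD) (n : ℕ) : Set (EuclideanSpace ℝ (Fin n)) :=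
  {v | (∃ i j : ℕ, 1 ≤ i ∧ i < j ∧ j ≤ n ∧
          (v = stdE n i - stdE n j ∨ v = -(stdE n i - stdE n j) ∨
           v = stdE n i + stdE n j ∨ v = -(stdE n i + stdE n j))) ∨
       (match t with
        | .B => ∃ i : ℕ, 1 ≤ i ∧ i ≤ n ∧ (v = stdE n i ∨ v = -stdE n i)
        | .C => ∃ i : ℕ, 1 ≤ i ∧ i ≤ n ∧ (v = (2:ℝ) • stdE n i ∨ v = -((2:ℝ) • stdE n i))
        | .D => False)}

/-- The positive roots of `B_n` / `C_n` / `D_n` in the standard realization. -/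
def bcdPos (t : BCD) (n : ℕ) : Set (EuclideanSpace ℝ (Fin n)) :=
  {v | (∃ i j : ℕ, 1 ≤ i ∧ i < j ∧ j ≤ n ∧
          (v = stdE n i - stdE n j ∨ v = stdE n i + stdE n j)) ∨
       (match t with
        | .B => ∃ i : ℕ, 1 ≤ i ∧ i ≤ n ∧ v = stdE n i
        | .C => ∃ i : ℕ, 1 ≤ i ∧ i ≤ n ∧ v = (2:ℝ) • stdE n i
        | .D => False)}

/-- The simple roots of `B_n` / `C_n` / `D_n` in the standard realization. -/
def bcdSimple (t : BCD) (n : ℕ) : Set (EuclideanSpace ℝ (Fin n)) :=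
  {v | (∃ i : ℕ, 1 ≤ i ∧ i < n ∧ v = stdE n i - stdE n (i + 1)) ∨
       (match t with
        | .B => v = stdE n n
        | .C => v = (2:ℝ) • stdE n n
        | .D => v = stdE n (n - 1) + stdE n n)}

/-- The simple root `α_k` of `B_n` / `C_n` / `D_n` (1-based index `k`). -/
def bcdAlpha (t : BCD) (n k : ℕ) : EuclideanSpace ℝ (Fin n) :=
  if k < n then stdE n k - stdE n (k + 1)
  else match t with
  | .B => stdE n n
  | .C => (2:ℝ) • stdE n n
  | .D => stdE n (n - 1) + stdE n n

/-!
Let `U` be the real span of `Φ_{β,1}`. Viewing weights as functionals on `V`, restriction to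
`Φ_{β,1}` is composition with the orthogonal projection onto `U`, so it commutes with `s_γ` for
`γ ∈ U` and with `W_I`, and a weight is determined by its restriction together with its values on
`Uᗮ`. Both `s_β` and `W_I` preserve those values: if `sgn(s_β λ, μ) ≠ 0` then `λ` and `μ` agree on
`Uᗮ`, and for weights agreeing there `sgn` is unchanged by restriction. A root `γ` contributing to
`c(λ, μ)` satisfies `μ = w s_γ λ` with `w ∈ W_I` and `⟨λ, γ^∨⟩ ≠ 0`; comparing values on `Uᗮ` gives
`γ ∈ U`, that is, `γ ∈ Φ_{β,1}`.
-/

section Weights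

variable {E : Type*} [NormedAddCommGroup E] [InnerProductSpace ℝ E]

lemma coroot_mem {U : Submodule ℝ E} {α : E} (hα : α ∈ U) : coroot α ∈ U :=
  U.smul_mem _ hα

lemma inner_coroot (α v : E) : ⟪v, coroot α⟫ = 2 / ⟪α, α⟫ * ⟪v, α⟫ := by
  simp [coroot, real_inner_smul_right]

lemma inner_coroot_pos_iff {α : E} (hα : α ≠ 0) {v : E} : 0 < ⟪v, coroot α⟫ ↔ 0 < ⟪v, α⟫ := by
  rw [inner_coroot]
  exact mul_pos_iff_of_pos_left (div_pos two_pos (real_inner_self_pos.2 hα))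

lemma smul_coroot (α : E) : (⟪α, α⟫ / 2) • coroot α = α := by
  rcases eq_or_ne α 0 with rfl | hα
  · simp
  · have hα' : ⟪α, α⟫ ≠ 0 := inner_self_ne_zero.2 hα
    rw [coroot, smul_smul, div_mul_div_cancel₀ two_ne_zero, div_self hα', one_smul]

lemma emb_apply (α v : E) : emb α v = (⟪α, v⟫ : ℂ) :=
  rfl

lemma sRefl_apply (γ : E) (l : HStar E) (v : E) :
    sRefl γ l v = l v - l (coroot γ) * (⟪γ, v⟫ : ℂ) :=
  rfl

lemma sRefl_eqOn_orthogonal {U : Submodule ℝ E} {γ : E} (hγ : γ ∈ U) (l : HStar E) :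
    Set.EqOn (sRefl γ l) l Uᗮ := fun v hv => by
  rw [sRefl_apply, Submodule.inner_right_of_mem_orthogonal hγ hv, Complex.ofReal_zero, mul_zero,
    sub_zero]

lemma apply_eq_zero_of_mem_span_emb {Q : Set E} {l : HStar E}
    (hl : l ∈ Submodule.span ℂ (emb '' Q)) {v : E} (hv : v ∈ (Submodule.span ℝ Q)ᗮ) :
    l v = 0 := by
  induction hl using Submodule.span_induction with
  | mem _ hx =>
    obtain ⟨α, hα, rfl⟩ := hx
    rw [emb_apply, Submodule.inner_right_of_mem_orthogonal (Submodule.subset_span hα) hv,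
      Complex.ofReal_zero]
  | zero => rfl
  | add _ _ _ _ hx hy => rw [LinearMap.add_apply, hx, hy, add_zero]
  | smul c _ _ hx => rw [LinearMap.smul_apply, hx, smul_zero]

lemma emb_mem_span {Q : Set E} {v : E} (hv : v ∈ Submodule.span ℝ Q) :
    emb v ∈ Submodule.span ℂ (emb '' Q) := by
  induction hv using Submodule.span_induction with
  | mem x hx => exact Submodule.subset_span ⟨x, hx, rfl⟩
  | zero =>
    convert Submodule.zero_mem _
    ext v
    simp [emb_apply]
  | add x y _ _ hx hy =>
    convert Submodule.add_mem _ hx hy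
    ext v
    simp [emb_apply, inner_add_left]
  | smul c x _ hx =>
    convert Submodule.smul_mem _ (c : ℂ) hx
    ext v
    simp [emb_apply, real_inner_smul_left]

end Weights

section Restriction

variable {P Q : Set V} {l m : HStar V}

lemma reflV_apply (α v : V) : reflV α v = v - ⟪v, coroot α⟫ • α := by
  unfold reflV
  split_ifs with h
  · simp [inner_self_eq_zero.1 h]
  · simp [Module.reflection_apply, corootForm]

lemma inner_reflV_reflV (α v w : V) : ⟪reflV α v, reflV α w⟫ = ⟪v, w⟫ := by
  rcases eq_or_ne α 0 with rfl | hα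
  · simp [reflV_apply]
  · have hα' : ⟪α, α⟫ ≠ 0 := inner_self_ne_zero.2 hα
    simp only [reflV_apply, inner_coroot, inner_sub_left, inner_sub_right, real_inner_smul_left,
      real_inner_smul_right, real_inner_comm α]
    field_simp
    ring

lemma coroot_reflV (α β : V) :
    coroot (reflV α β) = coroot β - ⟪α, coroot β⟫ • coroot α := by
  have h : ⟪α, coroot β⟫ • coroot α = ⟪coroot β, coroot α⟫ • α := by
    rw [inner_coroot α (coroot β), coroot.eq_1 α, smul_smul, real_inner_comm, mul_comm]
  rw [h, ← reflV_apply, coroot, inner_reflV_reflV, coroot, map_smul]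

lemma starProjection_reflV {U : Submodule ℝ V} {α : V} (hα : α ∈ U) (v : V) :
    U.starProjection (reflV α v) = reflV α (U.starProjection v) := by
  simp only [reflV_apply, map_sub, map_smul, Submodule.inner_starProjection_left_eq_right,
    Submodule.starProjection_eq_self_iff.2 hα,
    Submodule.starProjection_eq_self_iff.2 (coroot_mem hα)]

lemma starProjection_weyl_apply {U : Submodule ℝ V} (hP : P ⊆ U) {w : V ≃ₗ[ℝ] V}
    (hw : w ∈ weyl P) (v : V) : U.starProjection (w v) = w (U.starProjection v) := by
  induction hw using Subgroup.closure_induction generalizing v with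
  | mem _ hx =>
    obtain ⟨α, hα, rfl⟩ := hx
    exact starProjection_reflV (hP hα) v
  | one => rfl
  | mul x y _ _ hx hy => rw [LinearEquiv.mul_apply, hx, hy, LinearEquiv.mul_apply]
  | inv x _ hx =>
    apply x.injective
    rw [← hx, ← LinearEquiv.mul_apply, ← LinearEquiv.mul_apply, mul_inv_cancel,
      LinearEquiv.coe_one, id, id]

lemma weyl_le_fixingSubgroup_orthogonal (P : Set V) :
    weyl P ≤ fixingSubgroup (V ≃ₗ[ℝ] V) ((Submodule.span ℝ P)ᗮ : Set V) := by
  refine (Subgroup.closure_le _).2 ?_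
  rintro _ ⟨α, hα, rfl⟩
  refine (mem_fixingSubgroup_iff _).2 fun v hv => ?_
  have hv' : ⟪v, coroot α⟫ = 0 :=
    Submodule.inner_left_of_mem_orthogonal (coroot_mem (Submodule.subset_span hα)) hv
  rw [LinearEquiv.smul_def, reflV_apply, hv', zero_smul, sub_zero]

lemma wAct_eqOn_orthogonal {w : V ≃ₗ[ℝ] V} (hw : w ∈ weyl P) (l : HStar V) :
    Set.EqOn (wAct w l) l (Submodule.span ℝ P)ᗮ := fun v hv =>
  congrArg l ((mem_fixingSubgroup_iff _).1
    (weyl_le_fixingSubgroup_orthogonal P (inv_mem hw)) v hv)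

lemma comp_starProjection_mem_span (Q : Set V) (l : HStar V) :
    l ∘ₗ (Submodule.span ℝ Q).starProjection ∈ Submodule.span ℂ (emb '' Q) := by
  let b := stdOrthonormalBasis ℝ (Submodule.span ℝ Q)
  have h : l ∘ₗ (Submodule.span ℝ Q).starProjection = ∑ i, l (b i) • emb (b i : V) := by
    ext v
    simp [b.starProjection_eq_sum_rankOne, emb_apply, mul_comm]
  rw [h]
  exact Submodule.sum_mem _ fun i _ => Submodule.smul_mem _ _ (emb_mem_span (b i).2)

theorem restrictW_apply (Q : Set V) (l : HStar V) (v : V) :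
    restrictW Q l v = l ((Submodule.span ℝ Q).starProjection v) := by
  set U := Submodule.span ℝ Q
  have hspec : restrictW Q l ∈ Submodule.span ℂ (emb '' Q) ∧
      ∀ α ∈ Q, restrictW Q l (coroot α) = l (coroot α) := by
    refine Classical.epsilon_spec (p := fun m : HStar V => m ∈ Submodule.span ℂ (emb '' Q) ∧
      ∀ α ∈ Q, m (coroot α) = l (coroot α)) ⟨_, comp_starProjection_mem_span Q l, fun α hα => ?_⟩
    exact congrArg l
      (Submodule.starProjection_eq_self_iff.2 (coroot_mem (Submodule.subset_span hα)))
  have hU : Set.EqOn (restrictW Q l) l U := LinearMap.eqOn_span fun α hα => by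
    rw [← smul_coroot α, map_smul, map_smul, hspec.2 α hα]
  have hperp : restrictW Q l (v - U.starProjection v) = 0 :=
    apply_eq_zero_of_mem_span_emb hspec.1 (U.sub_starProjection_mem_orthogonal v)
  rw [← hU (U.starProjection_apply_mem v), ← sub_eq_zero, ← map_sub, hperp]

lemma restrictW_eqOn_span (Q : Set V) (l : HStar V) :
    Set.EqOn (restrictW Q l) l (Submodule.span ℝ Q) := fun v hv => by
  rw [restrictW_apply, Submodule.starProjection_eq_self_iff.2 hv]

lemma restrictW_mem_span (Q : Set V) (l : HStar V) :
    restrictW Q l ∈ Submodule.span ℂ (emb '' Q) := by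
  have h : restrictW Q l = l ∘ₗ (Submodule.span ℝ Q).starProjection :=
    LinearMap.ext (restrictW_apply Q l)
  exact h ▸ comp_starProjection_mem_span Q l

lemma eq_of_restrictW_eq (h : restrictW Q l = restrictW Q m)
    (hperp : Set.EqOn l m (Submodule.span ℝ Q)ᗮ) : l = m := by
  ext v
  have hU := LinearMap.congr_fun h v
  rw [restrictW_apply, restrictW_apply] at hU
  have hv := hperp (Submodule.sub_starProjection_mem_orthogonal (K := Submodule.span ℝ Q) v)
  rwa [map_sub, map_sub, hU, sub_left_inj] at hv

lemma restrictW_sRefl {γ : V} (hγ : γ ∈ Submodule.span ℝ Q) (l : HStar V) :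
    restrictW Q (sRefl γ l) = sRefl γ (restrictW Q l) := by
  ext v
  rw [restrictW_apply, sRefl_apply, sRefl_apply, restrictW_apply,
    restrictW_eqOn_span Q l (coroot_mem hγ), ← Submodule.inner_starProjection_left_eq_right,
    Submodule.starProjection_eq_self_iff.2 hγ]

lemma restrictW_wAct (hP : P ⊆ Submodule.span ℝ Q) {w : V ≃ₗ[ℝ] V} (hw : w ∈ weyl P)
    (l : HStar V) : restrictW Q (wAct w l) = wAct w (restrictW Q l) := by
  ext v
  rw [restrictW_apply]
  exact (congrArg l (starProjection_weyl_apply hP (inv_mem hw) v).symm).trans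
    (restrictW_apply Q l _).symm

lemma isRegularOn_restrictW (hP : P ⊆ Submodule.span ℝ Q) :
    IsRegularOn P (restrictW Q l) ↔ IsRegularOn P l :=
  forall₂_congr fun _ hα => by rw [restrictW_eqOn_span Q l (hP hα)]

end Restriction

section Sign

variable {S : RootSys V} {P Q : Set V} {l m l' m' : HStar V}

lemma sgnW_ne_zero_iff :
    sgnW S P l m ≠ 0 ↔ IsRegularOn P l ∧ IsRegularOn P m ∧ ∃ w, w ∈ weyl P ∧ m = wAct w l := by
  unfold sgnW
  split_ifs with h
  · exact iff_of_true (pow_ne_zero _ (neg_ne_zero.2 one_ne_zero)) h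
  · exact iff_of_false (fun h0 => h0 rfl) h

-- The sign is that of a chosen `w` with `m = wAct w l`, so equal sets of candidates give equal
-- signs; no uniqueness of `w` is needed.
lemma sgnW_congr (hl : IsRegularOn P l ↔ IsRegularOn P l')
    (hm : IsRegularOn P m ↔ IsRegularOn P m')
    (hw : ∀ w ∈ weyl P, m = wAct w l ↔ m' = wAct w l') :
    sgnW S P l m = sgnW S P l' m' := by
  have htransporter : (fun w => w ∈ weyl P ∧ m = wAct w l) = fun w => w ∈ weyl P ∧ m' = wAct w l' :=
    funext fun w => propext (and_congr_right (hw w))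
  unfold sgnW
  simp only [hl, hm, htransporter]

lemma eqOn_orthogonal_of_sgnW_ne_zero (h : sgnW S P l m ≠ 0) :
    Set.EqOn m l (Submodule.span ℝ P)ᗮ := by
  obtain ⟨-, -, w, hw, rfl⟩ := sgnW_ne_zero_iff.1 h
  exact wAct_eqOn_orthogonal hw l

theorem sgnW_restrictW (hP : P ⊆ Submodule.span ℝ Q)
    (hlm : Set.EqOn m l (Submodule.span ℝ Q)ᗮ) :
    sgnW S P (restrictW Q l) (restrictW Q m) = sgnW S P l m := by
  refine sgnW_congr (isRegularOn_restrictW hP) (isRegularOn_restrictW hP) fun w hw => ?_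
  rw [← restrictW_wAct hP hw]
  refine ⟨fun h => eq_of_restrictW_eq h (hlm.trans ?_), fun h => h ▸ rfl⟩
  exact ((wAct_eqOn_orthogonal hw l).mono
    (Submodule.orthogonal_le (Submodule.span_le.2 hP))).symm

end Sign

section JantzenCoefficient

variable {S : RootSys V} {P Q : Set V} {l m : HStar V}

lemma PsiPP_restrictW (hP : P ⊆ Submodule.span ℝ Q) :
    PsiPP S P Q (restrictW Q l) = PsiPP S P Q l := by
  ext γ
  simp only [PsiPP, PsiP, Set.mem_ofPred_eq, and_assoc]
  refine and_congr_right fun hγ => ?_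
  have hγQ : γ ∈ Submodule.span ℝ Q := Submodule.subset_span hγ.1
  rw [restrictW_eqOn_span Q l (coroot_mem hγQ), ← restrictW_sRefl hγQ]
  exact and_congr_right' (and_congr_right' (isRegularOn_restrictW hP))

theorem jc_restrictW (hP : P ⊆ Submodule.span ℝ Q)
    (hlm : Set.EqOn m l (Submodule.span ℝ Q)ᗮ) :
    jc S P Q (restrictW Q l) (restrictW Q m) = jc S P Q l m := by
  refine finsum_mem_congr (PsiPP_restrictW hP) fun γ hγ => ?_
  have hγQ : γ ∈ Submodule.span ℝ Q := Submodule.subset_span hγ.1.1.1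
  rw [← restrictW_sRefl hγQ, sgnW_restrictW hP (hlm.trans (sRefl_eqOn_orthogonal hγQ l).symm)]

lemma mem_span_of_sgnW_sRefl_ne_zero (hP : P ⊆ Submodule.span ℝ Q)
    (hlm : Set.EqOn m l (Submodule.span ℝ Q)ᗮ) {γ : V} (hγ : l (coroot γ) ≠ 0)
    (h : sgnW S P (sRefl γ l) m ≠ 0) : γ ∈ Submodule.span ℝ Q := by
  rw [← Submodule.orthogonal_orthogonal (Submodule.span ℝ Q)]
  refine (Submodule.mem_orthogonal' _ _).2 fun v hv => ?_
  have hlv : l v = sRefl γ l v := (hlm hv).symm.trans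
    (eqOn_orthogonal_of_sgnW_ne_zero h (Submodule.orthogonal_le (Submodule.span_le.2 hP) hv))
  rw [sRefl_apply, eq_comm, sub_eq_self, mul_eq_zero] at hlv
  exact Complex.ofReal_eq_zero.1 (hlv.resolve_left hγ)

theorem jc_roots_eq_jc (hP : P ⊆ Submodule.span ℝ Q)
    (hQ : Q = (S.Φ : Set V) ∩ Submodule.span ℝ Q)
    (hlm : Set.EqOn m l (Submodule.span ℝ Q)ᗮ) :
    jc S P (S.Φ : Set V) l m = jc S P Q l m := by
  refine finsum_mem_inter_support_eq _ _ _ (Set.ext fun γ => ?_)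
  refine and_congr_left fun hsgn => and_congr_left fun _ => ?_
  refine ⟨fun ⟨⟨hΦ, hpos⟩, hγP, hposint⟩ => ⟨⟨?_, hpos⟩, hγP, hposint⟩,
    fun ⟨⟨hγQ, hpos⟩, hrest⟩ => ⟨⟨(hQ.le hγQ).1, hpos⟩, hrest⟩⟩
  obtain ⟨n, hn, hln⟩ := hposint
  have hne : l (coroot γ) ≠ 0 := hln ▸ Int.cast_ne_zero.2 hn.ne'
  exact hQ.ge ⟨hΦ, mem_span_of_sgnW_sRefl_ne_zero hP hlm hne hsgn⟩

end JantzenCoefficient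

section RootSystem

namespace RootSys

variable (S : RootSys V) {I : Finset V} {α : V}

lemma eq_zero_of_forall_inner_coroot_eq_zero {v : V} (h : ∀ δ ∈ S.Φ, ⟪v, coroot δ⟫ = 0) :
    v = 0 := by
  have hv : ∀ x ∈ Submodule.span ℝ (S.Φ : Set V), innerₛₗ ℝ v x = (0 : V →ₗ[ℝ] ℝ) x :=
    LinearMap.eqOn_span fun δ hδ => by
      rw [← smul_coroot δ, map_smul, map_smul, innerₛₗ_apply_apply, h δ hδ, LinearMap.zero_apply]
  exact inner_self_eq_zero.1 (hv v (S.span_eq_top ▸ Submodule.mem_top))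

/-- The basis of `V` formed by the simple roots. -/
def simpleBasis : Module.Basis {a : V // a ∈ S.Δ} ℝ V :=
  Module.Basis.mk S.simple_indep <| by
    rw [← S.span_eq_top]
    refine Submodule.span_le.2 fun α hα => ?_
    have hpos : ∀ α ∈ S.pos,
        α ∈ Submodule.span ℝ (Set.range fun i : {a : V // a ∈ S.Δ} => i.1) := fun α hα => by
      obtain ⟨c, -, rfl⟩ := S.simple_gen α hα
      exact Submodule.sum_mem _ fun i hi =>
        Submodule.smul_mem _ _ (Submodule.subset_span ⟨⟨i, hi⟩, rfl⟩)
    exact (S.mem_pos_or α hα).elim (hpos α) fun h => neg_mem_iff.1 (hpos _ h)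

lemma simpleBasis_apply (i : {a : V // a ∈ S.Δ}) : S.simpleBasis i = i :=
  Module.Basis.mk_apply _ _ i

lemma simpleBasis_coord_simple (i j : {a : V // a ∈ S.Δ}) :
    S.simpleBasis.coord i j = if j = i then 1 else 0 := by
  rw [← simpleBasis_apply, Module.Basis.coord_apply, Module.Basis.repr_self, Finsupp.single_apply]

lemma sum_simpleBasis_coord_smul (v : V) : ∑ i, S.simpleBasis.coord i v • (i : V) = v := by
  simpa only [simpleBasis_apply, Module.Basis.coord_apply] using S.simpleBasis.sum_repr v

variable {S}

lemma simpleBasis_coord_nonneg (hα : α ∈ S.pos) (i : {a : V // a ∈ S.Δ}) :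
    0 ≤ S.simpleBasis.coord i α := by
  obtain ⟨c, hc, hsum⟩ := S.simple_gen α hα
  have hsum' : α = ∑ j : {a : V // a ∈ S.Δ}, c j • S.simpleBasis j := by
    simp only [simpleBasis_apply]
    rw [hsum, ← Finset.sum_coe_sort]
  rw [hsum', Module.Basis.coord_apply, Module.Basis.repr_sum_self]
  exact hc i i.2

lemma simpleBasis_coord_eq_zero (hI : I ⊆ S.Δ) {v : V} (hv : v ∈ Submodule.span ℝ (I : Set V))
    {i : {a : V // a ∈ S.Δ}} (hi : (i : V) ∉ I) : S.simpleBasis.coord i v = 0 := by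
  refine (Submodule.span_le (p := LinearMap.ker (S.simpleBasis.coord i))).2 (fun j hj => ?_) hv
  refine (S.simpleBasis_coord_simple i ⟨j, hI hj⟩).trans (if_neg ?_)
  rintro rfl
  exact hi hj

lemma exists_simple_inner_pos (hI : I ⊆ S.Δ) (hα : α ∈ S.pos)
    (hspan : α ∈ Submodule.span ℝ (I : Set V)) : ∃ i ∈ I, 0 < ⟪α, i⟫ := by
  by_contra! hneg
  have hpos : 0 < ⟪α, α⟫ := real_inner_self_pos.2 (S.ne_zero α (S.pos_subset hα))
  have hsum : ⟪α, α⟫ = ∑ i : {a : V // a ∈ S.Δ}, S.simpleBasis.coord i α * ⟪α, i⟫ := by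
    conv_lhs => rw [← S.sum_simpleBasis_coord_smul α, inner_sum, S.sum_simpleBasis_coord_smul α]
    simp only [real_inner_smul_right]
  refine hpos.not_ge (hsum.trans_le (Finset.sum_nonpos fun i _ => ?_))
  by_cases hi : (i : V) ∈ I
  · exact mul_nonpos_of_nonneg_of_nonpos (simpleBasis_coord_nonneg hα i) (hneg i hi)
  · rw [simpleBasis_coord_eq_zero hI hspan hi, zero_mul]

lemma reflV_simple_mem_pos {i : V} (hi : i ∈ S.Δ) (hα : α ∈ S.pos) (hne : α ≠ i) :
    reflV i α ∈ S.pos := by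
  have hiΦ : i ∈ S.Φ := S.pos_subset (S.simple_subset hi)
  have hαΦ : α ∈ S.Φ := S.pos_subset hα
  refine (S.mem_pos_or _ (S.refl_mem i hiΦ α hαΦ)).resolve_right fun hneg => ?_
  have hcoord : ∀ j, j ≠ ⟨i, hi⟩ → S.simpleBasis.coord j α = 0 := fun j hj => by
    have hj0 := simpleBasis_coord_nonneg hneg j
    rw [reflV_apply, map_neg, map_sub, map_smul, S.simpleBasis_coord_simple j ⟨i, hi⟩,
      if_neg hj.symm, smul_zero, sub_zero] at hj0
    exact le_antisymm (neg_nonneg.1 hj0) (simpleBasis_coord_nonneg hα j)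
  obtain ⟨c, rfl⟩ : ∃ c : ℝ, c • i = α := by
    refine ⟨S.simpleBasis.coord ⟨i, hi⟩ α, ?_⟩
    have hsum := S.sum_simpleBasis_coord_smul α
    rwa [Fintype.sum_eq_single ⟨i, hi⟩ fun j hj => by rw [hcoord j hj, zero_smul]] at hsum
  rcases S.reduced i hiΦ c hαΦ with rfl | rfl
  · exact hne (one_smul ℝ i)
  · exact S.not_both i (S.simple_subset hi) (by rwa [neg_one_smul] at hα)

variable (S) in
/-- The height of a vector: the linear functional taking the value `1` on every simple root. -/
def height : V →ₗ[ℝ] ℝ :=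
  S.simpleBasis.constr ℝ fun _ => 1

lemma height_simple {i : V} (hi : i ∈ S.Δ) : S.height i = 1 := by
  have h : S.height (S.simpleBasis ⟨i, hi⟩) = 1 := Module.Basis.constr_basis _ _ _ _
  rwa [simpleBasis_apply] at h

theorem pos_span_induction {p : V → Prop} (hI : I ⊆ S.Δ) (simple : ∀ i ∈ I, p i)
    (refl : ∀ i ∈ I, ∀ α ∈ S.pos, 0 < ⟪α, i⟫ → p (reflV i α) → p α)
    (hα : α ∈ S.pos) (hspan : α ∈ Submodule.span ℝ (I : Set V)) : p α := by
  by_contra hp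
  obtain ⟨γ, hγ, hmin⟩ := (S.pos.filter fun γ => γ ∈ Submodule.span ℝ (I : Set V) ∧ ¬ p γ)
    |>.exists_min_image S.height ⟨α, Finset.mem_filter.2 ⟨hα, hspan, hp⟩⟩
  obtain ⟨hγpos, hγspan, hγp⟩ := Finset.mem_filter.1 hγ
  obtain ⟨i, hi, hγi⟩ := exists_simple_inner_pos hI hγpos hγspan
  have hne : γ ≠ i := fun h => hγp (h ▸ simple i hi)
  have hs_span : reflV i γ ∈ Submodule.span ℝ (I : Set V) :=
    reflV_apply i γ ▸ Submodule.sub_mem _ hγspan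
      (Submodule.smul_mem _ _ (Submodule.subset_span hi))
  have hs_lower : S.height (reflV i γ) < S.height γ := by
    have hi0 : i ≠ 0 := S.ne_zero i (S.pos_subset (S.simple_subset (hI hi)))
    rw [reflV_apply, map_sub, map_smul, height_simple (hI hi), smul_eq_mul, mul_one]
    exact sub_lt_self _ ((inner_coroot_pos_iff hi0).2 hγi)
  refine hγp (refl i hi γ hγpos hγi ?_)
  by_contra hs
  exact hs_lower.not_ge (hmin _
    (Finset.mem_filter.2 ⟨reflV_simple_mem_pos (hI hi) hγpos hne, hs_span, hs⟩))

end RootSys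

lemma exists_ratLinear_retraction : ∃ p : ℝ →ₗ[ℚ] ℚ, ∀ q : ℚ, p q = q := by
  obtain ⟨p, hp⟩ := (Algebra.linearMap ℚ ℝ).exists_leftInverse_of_injective
    (LinearMap.ker_eq_bot.2 (algebraMap ℚ ℝ).injective)
  exact ⟨p, LinearMap.congr_fun hp⟩

variable {S : RootSys V} {I : Finset V} {l : HStar V} {α : V}

-- The retraction does not change the integers `⟨γ, δ^∨⟩`, which determine `γ`.
lemma sum_retraction_smul_eq {p : ℝ →ₗ[ℚ] ℚ} (hp : ∀ q : ℚ, p q = q) {γ : V} (hγ : γ ∈ S.Φ)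
    {t : Finset V} (ht : t ⊆ S.Φ) {c : V → ℝ} (hsum : ∑ α ∈ t, c α • α = γ) :
    ∑ α ∈ t, (p (c α) : ℝ) • α = γ := by
  refine sub_eq_zero.1 (S.eq_zero_of_forall_inner_coroot_eq_zero fun δ hδ => ?_)
  choose! n hn using S.crystallographic δ hδ
  have hpair (d : V → ℝ) : ⟪∑ α ∈ t, d α • α, coroot δ⟫ = ∑ α ∈ t, n α • d α := by
    rw [sum_inner]
    refine Finset.sum_congr rfl fun α hα => ?_
    rw [real_inner_smul_left, hn α (ht hα), zsmul_eq_mul, mul_comm]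
  have hreal : ∑ α ∈ t, n α • c α = ((n γ : ℚ) : ℝ) := by
    rw [← hpair, hsum, hn γ hγ, Rat.cast_intCast]
  have hrat : ∑ α ∈ t, n α • p (c α) = n γ := by
    rw [← hp (n γ), ← hreal, map_sum]
    simp only [map_zsmul]
  rw [inner_sub_left, hpair, hn γ hγ, sub_eq_zero]
  simp only [zsmul_eq_mul] at hrat ⊢
  exact_mod_cast hrat

theorem ratSpanRoots_eq {A : Set V} (hA : A ⊆ S.Φ) :
    ratSpanRoots S A = (S.Φ : Set V) ∩ Submodule.span ℝ A := by
  ext γ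
  refine and_congr_right fun hγ => ⟨?_, fun hspan => ?_⟩
  · rintro ⟨t, c, htA, rfl⟩
    exact Submodule.sum_mem _ fun α hα => Submodule.smul_mem _ _ (Submodule.subset_span (htA hα))
  · obtain ⟨c, t, htA, -, hsum⟩ := Submodule.mem_span_iff_exists_finset_subset.1 hspan
    obtain ⟨p, hp⟩ := exists_ratLinear_retraction
    exact ⟨t, fun α => p (c α), htA,
      (sum_retraction_smul_eq hp hγ (Finset.coe_subset.1 (htA.trans hA)) hsum).symm⟩

lemma subset_ratSpanRoots {A : Set V} (hA : A ⊆ S.Φ) : A ⊆ ratSpanRoots S A :=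
  ratSpanRoots_eq hA ▸ Set.subset_inter hA Submodule.subset_span

lemma span_ratSpanRoots {A : Set V} (hA : A ⊆ S.Φ) :
    Submodule.span ℝ (ratSpanRoots S A) = Submodule.span ℝ A :=
  le_antisymm (Submodule.span_le.2 (ratSpanRoots_eq hA ▸ Set.inter_subset_right))
    (Submodule.span_mono (subset_ratSpanRoots hA))

lemma isPosInt_apply_coroot (hI : I ⊆ S.Δ) (hl : l ∈ LambdaP (I : Set V))
    (hαI : α ∈ PhiI S I) (hα : α ∈ S.pos) : IsPosInt (l (coroot α)) := by
  refine RootSys.pos_span_induction (p := fun α => IsPosInt (l (coroot α))) hI hl ?_ hα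
    (Submodule.span_le_restrictScalars ℤ ℝ (I : Set V) hαI.2)
  rintro i hi α hα hinner ⟨n, hn, hsn⟩
  have hαΦ : α ∈ S.Φ := S.pos_subset hα
  obtain ⟨k, hk⟩ := S.crystallographic α hαΦ i (S.pos_subset (S.simple_subset (hI hi)))
  have hkpos : 0 < k := by
    rw [real_inner_comm, ← inner_coroot_pos_iff (S.ne_zero α hαΦ), hk] at hinner
    exact_mod_cast hinner
  obtain ⟨r, hr, hir⟩ := hl i hi
  refine ⟨n + k * r, add_pos hn (mul_pos hkpos hr), ?_⟩
  have hcoroot : coroot α = coroot (reflV i α) + (k : ℝ) • coroot i := by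
    rw [coroot_reflV, hk, sub_add_cancel]
  rw [hcoroot, map_add, map_smul, hsn, hir]
  simp

lemma restrictW_mem_LambdaPSub_iff {Q : Set V} (hI : I ⊆ S.Δ) (hQ : PhiI S I ⊆ Q) :
    restrictW Q l ∈ LambdaPSub S (PhiI S I) Q ↔ l ∈ LambdaP (I : Set V) := by
  have hrestrict {α : V} (hα : α ∈ PhiI S I) : restrictW Q l (coroot α) = l (coroot α) :=
    restrictW_eqOn_span Q l (coroot_mem (Submodule.subset_span (hQ hα)))
  constructor
  · intro h i hi
    have hipos := S.simple_subset (hI hi)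
    have hiI : i ∈ PhiI S I := ⟨S.pos_subset hipos, Submodule.subset_span hi⟩
    exact hrestrict hiI ▸ h.2 i ⟨hiI, hipos⟩
  · exact fun hl => ⟨restrictW_mem_span Q l, fun α ⟨hαI, hαpos⟩ =>
      hrestrict hαI ▸ isPosInt_apply_coroot hI hl hαI hαpos⟩

end RootSystem

theorem statement_7_general (S : RootSys V) (I : Finset V) (hI : I ⊆ S.Δ) (lam : HStar V)
    (β : V) (hβ : β ∈ S.Φ) :
    ((∃ mu ∈ LambdaP (I : Set V), sgnW S (PhiI S I) (sRefl β lam) mu ≠ 0) ↔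
      (∃ mu' ∈ LambdaPSub S (PhiI S I) (ratSpanRoots S (PhiI S I ∪ {β})),
        sgnW S (PhiI S I)
          (sRefl β (restrictW (ratSpanRoots S (PhiI S I ∪ {β})) lam)) mu' ≠ 0)) ∧
    (∀ mu ∈ LambdaP (I : Set V), sgnW S (PhiI S I) (sRefl β lam) mu ≠ 0 →
      restrictW (ratSpanRoots S (PhiI S I ∪ {β})) mu ∈
        LambdaPSub S (PhiI S I) (ratSpanRoots S (PhiI S I ∪ {β})) ∧
      sgnW S (PhiI S I) (sRefl β (restrictW (ratSpanRoots S (PhiI S I ∪ {β})) lam))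
        (restrictW (ratSpanRoots S (PhiI S I ∪ {β})) mu) ≠ 0 ∧
      jc S (PhiI S I) (S.Φ : Set V) lam mu =
        jc S (PhiI S I) (ratSpanRoots S (PhiI S I ∪ {β}))
          (restrictW (ratSpanRoots S (PhiI S I ∪ {β})) lam)
          (restrictW (ratSpanRoots S (PhiI S I ∪ {β})) mu)) := by
  have hA : PhiI S I ∪ {β} ⊆ S.Φ :=
    Set.union_subset (fun _ hα => hα.1) (Set.singleton_subset_iff.2 hβ)
  have hQ := span_ratSpanRoots hA ▸ ratSpanRoots_eq hA
  obtain ⟨hPQ, hβQ⟩ := Set.union_subset_iff.1 (subset_ratSpanRoots hA)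
  set Q := ratSpanRoots S (PhiI S I ∪ {β})
  set P := PhiI S I
  have hP : P ⊆ Submodule.span ℝ Q := hPQ.trans Submodule.subset_span
  have hβU : β ∈ Submodule.span ℝ Q := Submodule.subset_span (hβQ rfl)
  rw [← restrictW_sRefl hβU]
  have hmu_perp {mu : HStar V} (h : sgnW S P (sRefl β lam) mu ≠ 0) :
      Set.EqOn mu (sRefl β lam) (Submodule.span ℝ Q)ᗮ :=
    (eqOn_orthogonal_of_sgnW_ne_zero h).mono (Submodule.orthogonal_le (Submodule.span_le.2 hP))
  have hrestrict {mu : HStar V} (hmu : mu ∈ LambdaP (I : Set V))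
      (h : sgnW S P (sRefl β lam) mu ≠ 0) : restrictW Q mu ∈ LambdaPSub S P Q ∧
        sgnW S P (restrictW Q (sRefl β lam)) (restrictW Q mu) ≠ 0 :=
    ⟨(restrictW_mem_LambdaPSub_iff hI hPQ).2 hmu, (sgnW_restrictW hP (hmu_perp h)).trans_ne h⟩
  refine ⟨⟨fun ⟨mu, hmu, h⟩ => ⟨restrictW Q mu, hrestrict hmu h⟩, ?_⟩, fun mu hmu h => ?_⟩
  · rintro ⟨mu', hmu', h⟩
    obtain ⟨-, -, w, hw, rfl⟩ := sgnW_ne_zero_iff.1 h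
    have hperp := (wAct_eqOn_orthogonal hw (sRefl β lam)).mono
      (Submodule.orthogonal_le (Submodule.span_le.2 hP))
    rw [← restrictW_wAct hP hw] at hmu' h
    exact ⟨_, (restrictW_mem_LambdaPSub_iff hI hPQ).1 hmu', sgnW_restrictW hP hperp ▸ h⟩
  · obtain ⟨hmem, hsgn⟩ := hrestrict hmu h
    have hlm := (hmu_perp h).trans (sRefl_eqOn_orthogonal hβU lam)
    exact ⟨hmem, hsgn, (jc_roots_eq_jc hP hQ hlm).trans (jc_restrictW hP hlm).symm⟩

/-- Lemma 4.8 (Parabolic invariance): for `λ ∈ Λ_I⁺` and `β ∈ Ψ_λ⁺`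
(note `Φ_I ⊆ Φ_{β,1}`), there is `μ ∈ Λ_I⁺` with `sgn(s_β λ, μ) ≠ 0` iff there is
`μ' ∈ Λ⁺(Φ_I, Φ_{β,1})` with `sgn(s_β (λ|_{Φ_{β,1}}), μ', Φ_I, Φ_{β,1}) ≠ 0`;
and if `sgn(s_β λ, μ) ≠ 0` then `μ' = μ|_{Φ_{β,1}}` works and
`c(λ, μ) = c(λ|_{Φ_{β,1}}, μ|_{Φ_{β,1}}, Φ_I, Φ_{β,1})`. -/
theorem statement_7 {V : Type*} [NormedAddCommGroup V] [InnerProductSpace ℝ V]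
    [FiniteDimensional ℝ V]
    (S : RootSys V) (I : Finset V) (hI : I ⊆ S.Δ)
    (lam : HStar V) (hlam : lam ∈ LambdaP (I : Set V))
    (β : V) (hβ : β ∈ PsiP S (PhiI S I) (S.Φ : Set V) lam) :
    ((∃ mu ∈ LambdaP (I : Set V), sgnW S (PhiI S I) (sRefl β lam) mu ≠ 0) ↔
      (∃ mu' ∈ LambdaPSub S (PhiI S I) (ratSpanRoots S (PhiI S I ∪ {β})),
        sgnW S (PhiI S I)
          (sRefl β (restrictW (ratSpanRoots S (PhiI S I ∪ {β})) lam)) mu' ≠ 0)) ∧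
    (∀ mu ∈ LambdaP (I : Set V), sgnW S (PhiI S I) (sRefl β lam) mu ≠ 0 →
      restrictW (ratSpanRoots S (PhiI S I ∪ {β})) mu ∈
        LambdaPSub S (PhiI S I) (ratSpanRoots S (PhiI S I ∪ {β})) ∧
      sgnW S (PhiI S I) (sRefl β (restrictW (ratSpanRoots S (PhiI S I ∪ {β})) lam))
        (restrictW (ratSpanRoots S (PhiI S I ∪ {β})) mu) ≠ 0 ∧
      jc S (PhiI S I) (S.Φ : Set V) lam mu =
        jc S (PhiI S I) (ratSpanRoots S (PhiI S I ∪ {β}))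
          (restrictW (ratSpanRoots S (PhiI S I ∪ {β})) lam)
          (restrictW (ratSpanRoots S (PhiI S I ∪ {β})) mu)) := by
  exact statement_7_general S I hI lam β hβ.1.1

end JantzenGVM
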